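/- arXiv:0805.2682 — 2 statements merged into one kernel-verified Lean document; each statement's English description precedes it below -/
import Mathlib

section
/- For every x ∈ X the sequence [κ_{-n}(x)]^{1/n} converges as n → ∞; its limit is denoted κ_-(x). -/
open Filter

/-!
Convergence fails only if `κ₋ₙ(x)` drops below `aⁿ` infinitely often and exceeds `bⁿ` infinitely
often for some `0 < a < b`. Passing to `g n = log⁺ (κ n / aⁿ)`, a subadditive cocycle, it suffices
to show: if `g n ≤ 0` on the whole fibre `f⁻ⁿ(x)` for infinitely many `n`, then for every `ε > 0`
one has `g n ≤ n * ε + C` on all fibres `f⁻ⁿ(x)`.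

Call a set `Y` slow if this bound holds on `Y ∩ f⁻ⁿ(x)` for all `n`, and rarely visited if orbit
segments avoiding a suitable slow set spend an arbitrarily small proportion of time in `Y`.
Noetherian induction shows that every closed set `Y` is rarely visited:
* if `Y` is contained in no `f⁻ᵈ(Y)` with `d ≥ 1`, then returns to `Y` in bounded time happen only
  from a finite union of the smaller closed sets `Y ∩ f⁻ᵈ(Y)`;
* if `fᵈ(Y) ⊊ Y`, then every visit to `Y` is followed by one to `fᵈ(Y)`;
* if `fᵈ(Y) = Y`, then `Y` is slow: following `Y` backwards from `x` produces a point of `Y` at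
  which some `g m` with `d ∣ m` is small compared to `m`. By semicontinuity `g m` is that small on
  `Y` outside a proper closed subset, which is rarely visited. Cutting an orbit into blocks of
  length `m` bounds `g n` up to the first visit to a slow set, whose own bound covers the rest.

The last case with `Y = X` is the claim.
-/

section Visits

variable {X : Type*} {f : X → X} {S T : Set X} {n : ℕ} {y : X}

/-- The number of times `t < n` at which the orbit of `y` under `f` is in `S`, as a real number. -/
noncomputable def visits (f : X → X) (S : Set X) (n : ℕ) (y : X) : ℝ :=
  birkhoffSum f (S.indicator 1) n y

lemma indicator_one_nonneg (S : Set X) (y : X) : 0 ≤ S.indicator (1 : X → ℝ) y :=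
  Set.indicator_nonneg (f := (1 : X → ℝ)) (fun _ _ => zero_le_one) y

lemma indicator_one_le_one (S : Set X) (y : X) : S.indicator (1 : X → ℝ) y ≤ 1 :=
  Set.indicator_le_self' (f := (1 : X → ℝ)) (fun _ _ => zero_le_one) y

lemma visits_nonneg : 0 ≤ visits f S n y := by
  unfold visits birkhoffSum
  exact Finset.sum_nonneg fun _ _ => indicator_one_nonneg S _

lemma visits_le : visits f S n y ≤ n := by
  unfold visits birkhoffSum
  calc ∑ t ∈ Finset.range n, S.indicator (1 : X → ℝ) (f^[t] y) ≤ ∑ _t ∈ Finset.range n, 1 :=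
        Finset.sum_le_sum fun _ _ => indicator_one_le_one S _
    _ = n := by simp

lemma visits_add (m n : ℕ) (y : X) :
    visits f S (m + n) y = visits f S m y + visits f S n (f^[m] y) :=
  birkhoffSum_add f _ m n y

lemma visits_succ (n : ℕ) (y : X) :
    visits f S (n + 1) y = S.indicator 1 y + visits f S n (f y) :=
  birkhoffSum_succ' f _ n y

lemma visits_union_le : visits f (S ∪ T) n y ≤ visits f S n y + visits f T n y := by
  unfold visits
  rw [← birkhoffSum_add']
  refine Finset.sum_le_sum fun t _ => ?_
  by_cases hS : f^[t] y ∈ S <;> by_cases hT : f^[t] y ∈ T <;> simp [hS, hT]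

lemma visits_eq_zero (h : ∀ t < n, f^[t] y ∉ S) : visits f S n y = 0 :=
  Finset.sum_eq_zero fun t ht => Set.indicator_of_notMem (h t (Finset.mem_range.1 ht)) _

lemma one_le_visits (hn : 0 < n) (hy : y ∈ S) : 1 ≤ visits f S n y := by
  obtain ⟨n, rfl⟩ := Nat.exists_eq_succ_of_ne_zero hn.ne'
  rw [visits_succ, Set.indicator_of_mem hy, Pi.one_apply]
  exact le_add_of_nonneg_right visits_nonneg

lemma visits_le_one_of_no_return (h : ∀ t, 0 < t → t < n → f^[t] y ∉ S) :
    visits f S n y ≤ 1 := by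
  cases n with
  | zero => exact visits_le.trans (by simp)
  | succ n =>
    have no_visits : visits f S n (f y) = 0 :=
      visits_eq_zero fun t ht => h (t + 1) t.succ_pos (by lia)
    rw [visits_succ, no_visits, add_zero]
    exact indicator_one_le_one S y

lemma visits_le_visits_image_add (d : ℕ) :
    visits f S n y ≤ visits f (f^[d] '' S) n y + d := by
  have shifted : visits f S n y ≤ visits f (f^[d] '' S) n (f^[d] y) := by
    unfold visits birkhoffSum
    refine Finset.sum_le_sum fun t _ => ?_
    by_cases hS : f^[t] y ∈ S
    · have hS' : f^[t] (f^[d] y) ∈ f^[d] '' S :=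
        ⟨_, hS, Function.Commute.iterate_iterate_self f d t y⟩
      simp [hS, hS']
    · rw [Set.indicator_of_notMem hS]
      exact indicator_one_nonneg _ _
  have split_before := visits_add (f := f) (S := f^[d] '' S) d n y
  have split_after := visits_add (f := f) (S := f^[d] '' S) n d y
  rw [add_comm] at split_after
  have before_nonneg : 0 ≤ visits f (f^[d] '' S) d y := visits_nonneg
  have after_le : visits f (f^[d] '' S) d (f^[n] y) ≤ d := visits_le
  linarith

lemma visits_le_visits_add_div {D : ℕ} (hD : 0 < D)
    (hT : ∀ y ∈ S, y ∉ T → ∀ t, 0 < t → t ≤ D → f^[t] y ∉ S) (n : ℕ) (y : X) :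
    visits f S n y ≤ visits f T n y + n / D + 1 := by
  induction n using Nat.strong_induction_on generalizing y with
  | _ n ih =>
  by_cases hy : y ∈ S ∧ y ∉ T
  · have at_most_one : ∀ j ≤ D, visits f S j y ≤ 1 := fun j hj =>
      visits_le_one_of_no_return fun t ht htj => hT y hy.1 hy.2 t ht (htj.le.trans hj)
    rcases le_total n D with hn | hn
    · have : (0 : ℝ) ≤ n / D := by positivity
      linarith [at_most_one n hn, visits_nonneg (f := f) (S := T) (n := n) (y := y)]
    · obtain ⟨j, rfl⟩ := Nat.exists_eq_add_of_le hn
      have block_div : ((D + j : ℕ) : ℝ) / D = 1 + j / D := by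
        push_cast
        field_simp
      rw [visits_add, visits_add, block_div]
      linarith [ih j (by lia) (f^[D] y), at_most_one D le_rfl,
        visits_nonneg (f := f) (S := T) (n := D) (y := y)]
  · cases n with
    | zero => simp [visits]
    | succ n =>
      have indicator_le : S.indicator (1 : X → ℝ) y ≤ T.indicator 1 y := by
        by_cases hS : y ∈ S <;> by_cases hT : y ∈ T <;> simp_all
      have div_le : (n : ℝ) / D ≤ ((n + 1 : ℕ) : ℝ) / D := by gcongr; lia
      rw [visits_succ, visits_succ]
      linarith [ih n (by lia) (f y)]

end Visits

section RarelyVisited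

variable {X : Type*} {f : X → X} {I : Order.Ideal (Set X)} {Y Z : Set X}

/-- `Y` is rarely visited, modulo an ideal `I` of negligible sets, if for every `η > 0` there is a
`G ∈ I` such that orbit segments avoiding `G` spend asymptotically at most the proportion `η` of
their time in `Y`. -/
def RarelyVisited (f : X → X) (I : Order.Ideal (Set X)) (Y : Set X) : Prop :=
  ∀ η : ℝ, 0 < η → ∃ G ∈ I, ∃ L : ℝ, ∀ n y, (∀ t < n, f^[t] y ∉ G) → visits f Y n y ≤ η * n + L

lemma RarelyVisited.of_mem (hY : Y ∈ I) : RarelyVisited f I Y := fun η hη =>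
  ⟨Y, hY, 0, fun n y avoid => by rw [visits_eq_zero avoid]; positivity⟩

lemma RarelyVisited.union (hY : RarelyVisited f I Y) (hZ : RarelyVisited f I Z) :
    RarelyVisited f I (Y ∪ Z) := by
  intro η hη
  obtain ⟨G, hG, L, hGL⟩ := hY (η / 2) (half_pos hη)
  obtain ⟨G', hG', L', hGL'⟩ := hZ (η / 2) (half_pos hη)
  refine ⟨G ∪ G', Order.Ideal.sup_mem hG hG', L + L', fun n y avoid => ?_⟩
  have visits_Y := hGL n y fun t ht h => avoid t ht (Or.inl h)
  have visits_Z := hGL' n y fun t ht h => avoid t ht (Or.inr h)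
  linarith [visits_union_le (f := f) (S := Y) (T := Z) (n := n) (y := y)]

lemma RarelyVisited.biUnion_finset {ι : Type*} {Z : ι → Set X} (s : Finset ι)
    (hZ : ∀ i ∈ s, RarelyVisited f I (Z i)) : RarelyVisited f I (⋃ i ∈ s, Z i) := by
  classical
  induction s using Finset.induction_on with
  | empty => simpa using RarelyVisited.of_mem I.bot_mem
  | insert i s _ ih =>
    rw [Finset.set_biUnion_insert]
    exact (hZ i (Finset.mem_insert_self i s)).union
      (ih fun j hj => hZ j (Finset.mem_insert_of_mem hj))

lemma RarelyVisited.of_image_iterate {d : ℕ} (h : RarelyVisited f I (f^[d] '' Y)) :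
    RarelyVisited f I Y := by
  intro η hη
  obtain ⟨G, hG, L, hGL⟩ := h η hη
  refine ⟨G, hG, L + d, fun n y avoid => ?_⟩
  linarith [hGL n y avoid, visits_le_visits_image_add (f := f) (S := Y) (n := n) (y := y) d]

lemma RarelyVisited.of_returns (h : ∀ d, 0 < d → RarelyVisited f I (Y ∩ f^[d] ⁻¹' Y)) :
    RarelyVisited f I Y := by
  intro η hη
  obtain ⟨D, hD⟩ := exists_nat_gt (2 / η)
  have hD0 : (0 : ℝ) < D := lt_trans (by positivity) hD
  have returns_rare : RarelyVisited f I (⋃ d ∈ Finset.Icc 1 D, Y ∩ f^[d] ⁻¹' Y) :=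
    .biUnion_finset _ fun d hd => h d (Finset.mem_Icc.1 hd).1
  obtain ⟨G, hG, L, hGL⟩ := returns_rare (η / 2) (half_pos hη)
  refine ⟨G, hG, L + 1, fun n y avoid => ?_⟩
  have sparse := visits_le_visits_add_div (f := f) (S := Y)
    (T := ⋃ d ∈ Finset.Icc 1 D, Y ∩ f^[d] ⁻¹' Y) (by exact_mod_cast hD0)
    (fun z hz hzT t ht htD hzt =>
      hzT (Set.mem_biUnion (Finset.mem_coe.2 (Finset.mem_Icc.2 ⟨ht, htD⟩)) ⟨hz, hzt⟩)) n y
  have div_le : (n : ℝ) / D ≤ η / 2 * n := by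
    rw [div_lt_iff₀ hη] at hD
    rw [div_le_iff₀ hD0]
    nlinarith [n.cast_nonneg (α := ℝ)]
  linarith [hGL n y avoid]

lemma isClosedMap_iterate [TopologicalSpace X] (hf : IsClosedMap f) (n : ℕ) :
    IsClosedMap f^[n] :=
  Nat.recOn n IsClosedMap.id fun _ ih => ih.comp hf

open TopologicalSpace in
theorem rarelyVisited_closeds [TopologicalSpace X] [NoetherianSpace X]
    (hf : Continuous f) (hf_closed : IsClosedMap f)
    (periodic : ∀ (Y : Closeds X) (d : ℕ), 0 < d → f^[d] '' Y = Y →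
      (∀ W : Closeds X, W < Y → RarelyVisited f I W) → (Y : Set X) ∈ I) (Y : Closeds X) :
    RarelyVisited f I Y := by
  induction Y using WellFoundedLT.induction with
  | _ Y ih =>
  by_cases invariant : ∃ d, 0 < d ∧ f^[d] '' Y ⊆ Y
  · obtain ⟨d, hd, hsub⟩ := invariant
    by_cases heq : f^[d] '' Y = Y
    · exact .of_mem (periodic Y d hd heq ih)
    · exact .of_image_iterate
        (ih ⟨f^[d] '' Y, isClosedMap_iterate hf_closed d _ Y.isClosed⟩ (hsub.ssubset_of_ne heq))
  · push Not at invariant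
    refine .of_returns fun d hd =>
      ih ⟨Y ∩ f^[d] ⁻¹' Y, Y.isClosed.inter (Y.isClosed.preimage (hf.iterate d))⟩
        ⟨Set.inter_subset_left, fun h => invariant d hd ?_⟩
    exact Set.image_subset_iff.2 fun y hy => (h hy).2

end RarelyVisited

section SubadditiveCocycle

variable {X : Type*} {f : X → X} {g : ℕ → X → ℝ} {x : X} {Y : Set X} {a b B : ℝ}

/-- A subadditive cocycle over `f`: the logarithmic form of a sub-multiplicative cocycle. -/
def IsSubadditiveCocycle (f : X → X) (g : ℕ → X → ℝ) : Prop :=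
  ∀ n m y, g (n + m) y ≤ g n y + g m (f^[n] y)

/-- The ideal of sets `Y` such that `g` grows along the part of the backward orbit of `x` in `Y` at
most linearly with slope `b`. -/
def backwardSlow (f : X → X) (g : ℕ → X → ℝ) (x : X) (b : ℝ) : Order.Ideal (Set X) where
  carrier := {Y | ∃ C : ℝ, ∀ n, ∀ y ∈ Y, f^[n] y = x → g n y ≤ n * b + C}
  lower' := fun _ _ hZY ⟨C, hC⟩ => ⟨C, fun n y hy => hC n y (hZY hy)⟩
  nonempty' := ⟨∅, 0, by simp⟩
  directed' := by
    rintro Y ⟨C, hC⟩ Z ⟨C', hC'⟩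
    refine ⟨Y ∪ Z, ⟨max C C', fun n y hy hyx => ?_⟩, Set.subset_union_left, Set.subset_union_right⟩
    rcases hy with hy | hy
    · exact (hC n y hy hyx).trans (by gcongr; exact le_max_left C C')
    · exact (hC' n y hy hyx).trans (by gcongr; exact le_max_right C C')

lemma mem_backwardSlow :
    Y ∈ backwardSlow f g x b ↔ ∃ C : ℝ, ∀ n, ∀ y ∈ Y, f^[n] y = x → g n y ≤ n * b + C :=
  Iff.rfl

lemma exists_forall_le_of_bddAbove (hbdd : ∀ n, BddAbove (Set.range (g n))) (m : ℕ) :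
    ∃ B > 0, ∀ j ≤ m, ∀ y, g j y ≤ B := by
  choose M hM using hbdd
  obtain ⟨B, hB⟩ := ((Set.finite_Iic m).image M).bddAbove
  refine ⟨max B 1, by positivity, fun j hj y => ?_⟩
  exact (hM j ⟨y, rfl⟩).trans ((hB ⟨j, hj, rfl⟩).trans (le_max_left B 1))

lemma exists_mem_iterate_mul_eq {d : ℕ} (hY : f^[d] '' Y = Y) (q : ℕ) {u : X} (hu : u ∈ Y) :
    ∃ z ∈ Y, f^[d * q] z = u := by
  have surjOn : Set.SurjOn (f^[d])^[q] Y Y := Set.SurjOn.iterate hY.ge q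
  rw [← Function.iterate_mul] at surjOn
  exact surjOn hu

/- The point is found by following `Y` backwards from `x` for `n + s` steps, where `s ≤ d` aligns
`n + s` with the period; `(d - 1) * i` further steps make the total length a multiple of `d`. -/
lemma IsSubadditiveCocycle.exists_lt_mul (hg : IsSubadditiveCocycle f g)
    (hbdd : ∀ n, BddAbove (Set.range (g n)))
    (hx : ∃ᶠ n in atTop, ∀ w, f^[n] w = x → g n w ≤ 0) (ha : 0 < a)
    {d i : ℕ} (hd : 0 < d) (hY : f^[d] '' Y = Y) (hi : x ∈ f^[i] '' Y) :
    ∃ p, 0 < p ∧ ∃ y ∈ Y, g (d * p) y < (d * p : ℕ) * a := by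
  obtain ⟨u, hu, hux⟩ := hi
  set r := d * i - i
  have hir : i + r = d * i := Nat.add_sub_of_le (Nat.le_mul_of_pos_left i hd)
  obtain ⟨B, -, hB⟩ := exists_forall_le_of_bddAbove hbdd (max d r)
  obtain ⟨M, hM⟩ := exists_nat_gt ((B + B) / a)
  obtain ⟨n, hn, hgn⟩ := frequently_atTop.1 hx (max M i)
  set q := (n - i) / d + 1
  have hq_lower : n - i < d * q := Nat.lt_mul_div_succ _ hd
  have hq_upper : d * q ≤ n - i + d := by
    have := Nat.mul_div_le (n - i) d
    rw [mul_add, mul_one]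
    lia
  obtain ⟨s, hs⟩ : ∃ s, d * q + i = n + s := Nat.exists_eq_add_of_le (by lia)
  obtain ⟨z, hz, hzu⟩ := exists_mem_iterate_mul_eq hY q hu
  have hzx : f^[n] (f^[s] z) = x := by
    rw [← Function.iterate_add_apply, ← hs, add_comm, Function.iterate_add_apply, hzu, hux]
  have total : d * (q + i) = s + (n + r) := by rw [mul_add]; lia
  refine ⟨q + i, by lia, z, hz, ?_⟩
  calc g (d * (q + i)) z ≤ g s z + (g n (f^[s] z) + g r (f^[n] (f^[s] z))) := by
        rw [total]
        exact (hg _ _ _).trans (by gcongr; exact hg _ _ _)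
    _ ≤ B + (0 + B) := by
        gcongr
        exacts [hB s (by lia) z, hgn _ hzx, hB r (le_max_right d r) _]
    _ < M * a := by rw [zero_add]; exact (div_lt_iff₀ ha).1 hM
    _ ≤ (d * (q + i) : ℕ) * a := by gcongr; lia

lemma IsSubadditiveCocycle.le_mul_add_visits (hg : IsSubadditiveCocycle f g) {m : ℕ} (hm : 0 < m)
    (ha : 0 ≤ a) (hB0 : 0 ≤ B) (hB : ∀ j ≤ m, ∀ y, g j y ≤ B) (hY : Set.MapsTo f^[m] Y Y)
    {W : Set X} (hW : ∀ y ∈ Y, y ∉ W → g m y ≤ m * a) (n : ℕ) {y : X} (hy : y ∈ Y) :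
    g n y ≤ n * a + B * visits f W n y + B := by
  have visits_term_nonneg : ∀ j z, 0 ≤ B * visits f W j z := fun _ _ =>
    mul_nonneg hB0 visits_nonneg
  induction n using Nat.strong_induction_on generalizing y with
  | _ n ih =>
  rcases lt_or_ge n m with hn | hn
  · have : 0 ≤ (n : ℝ) * a := by positivity
    linarith [hB n hn.le y, visits_term_nonneg n y]
  · obtain ⟨j, rfl⟩ := Nat.exists_eq_add_of_le hn
    have first_block : g m y ≤ m * a + B * visits f W m y := by
      by_cases hyW : y ∈ W
      · have : 0 ≤ (m : ℝ) * a := by positivity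
        linarith [hB m le_rfl y, le_mul_of_one_le_right hB0 (one_le_visits (f := f) hm hyW)]
      · linarith [hW y hy hyW, visits_term_nonneg m y]
    rw [visits_add]
    push_cast
    linarith [hg m j y, ih j (by lia) (hY hy)]

lemma IsSubadditiveCocycle.mem_backwardSlow_of_le_until_visit (hg : IsSubadditiveCocycle f g)
    {G : Set X} (hG : G ∈ backwardSlow f g x b) {C : ℝ}
    (hY : ∀ n, ∀ y ∈ Y, (∀ t < n, f^[t] y ∉ G) → g n y ≤ n * b + C) :
    Y ∈ backwardSlow f g x b := by
  obtain ⟨C', hC'⟩ := mem_backwardSlow.1 hG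
  refine mem_backwardSlow.2 ⟨C + max C' 0, fun n y hy hyx => ?_⟩
  by_cases hits : ∃ t, t < n ∧ f^[t] y ∈ G
  · classical
    obtain ⟨t, ⟨htn, htG⟩, first⟩ : ∃ t, (t < n ∧ f^[t] y ∈ G) ∧ ∀ s < t, f^[s] y ∉ G :=
      ⟨Nat.find hits, Nat.find_spec hits, fun s hs hsG =>
        Nat.find_min hits hs ⟨hs.trans (Nat.find_spec hits).1, hsG⟩⟩
    obtain ⟨j, rfl⟩ := Nat.exists_eq_add_of_le htn.le
    have after_hit := hC' j _ htG (by rwa [← Function.iterate_add_apply, add_comm])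
    push_cast
    linarith [hg t j y, hY t y hy first, le_max_left C' 0]
  · push Not at hits
    linarith [hY n y hy hits, le_max_right C' 0]

lemma IsSubadditiveCocycle.mem_backwardSlow_of_image_eq [TopologicalSpace X]
    (hg : IsSubadditiveCocycle f g) (husc : ∀ n, UpperSemicontinuous (g n))
    (hbdd : ∀ n, BddAbove (Set.range (g n)))
    (hx : ∃ᶠ n in atTop, ∀ w, f^[n] w = x → g n w ≤ 0) (hb : 0 < b)
    (hYc : IsClosed Y) {d : ℕ} (hd : 0 < d) (hY : f^[d] '' Y = Y)
    (ih : ∀ W, IsClosed W → W ⊂ Y → RarelyVisited f (backwardSlow f g x b) W) :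
    Y ∈ backwardSlow f g x b := by
  by_cases hits : ∃ i, x ∈ f^[i] '' Y
  swap
  · exact mem_backwardSlow.2 ⟨0, fun n y hy hyx => absurd ⟨n, y, hy, hyx⟩ hits⟩
  obtain ⟨i, hi⟩ := hits
  obtain ⟨p, hp, u, hu, hgu⟩ := hg.exists_lt_mul hbdd hx (half_pos hb) hd hY hi
  set m := d * p with hm
  have mapsTo : Set.MapsTo f^[m] Y Y := by
    rw [hm, Function.iterate_mul]
    exact Set.MapsTo.iterate (Set.mapsTo_iff_image_subset.2 hY.le) p
  set W := Y ∩ g m ⁻¹' Set.Ici (m * (b / 2))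
  have W_rare : RarelyVisited f (backwardSlow f g x b) W :=
    ih W (hYc.inter (upperSemicontinuous_iff_isClosed_preimage.1 (husc m) _))
      ⟨Set.inter_subset_left, fun h => hgu.not_ge (h hu).2⟩
  have small_off_W : ∀ y ∈ Y, y ∉ W → g m y ≤ m * (b / 2) := fun y hy hyW =>
    le_of_not_ge fun h => hyW ⟨hy, h⟩
  obtain ⟨B, hB0, hB⟩ := exists_forall_le_of_bddAbove hbdd m
  obtain ⟨G, hG, L, hGL⟩ := W_rare (b / 2 / B) (by positivity)
  refine hg.mem_backwardSlow_of_le_until_visit hG (C := B * L + B) fun n y hy avoid => ?_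
  calc g n y ≤ n * (b / 2) + B * visits f W n y + B :=
        hg.le_mul_add_visits (Nat.mul_pos hd hp) (half_pos hb).le hB0.le hB mapsTo small_off_W n hy
    _ ≤ n * (b / 2) + B * (b / 2 / B * n + L) + B := by gcongr; exact hGL n y avoid
    _ = n * b + (B * L + B) := by field_simp; ring

lemma bddAbove_range_of_upperSemicontinuous [TopologicalSpace X] [CompactSpace X] {h : X → ℝ}
    (hh : UpperSemicontinuous h) : BddAbove (Set.range h) := by
  rw [← Set.image_univ]
  exact (hh.upperSemicontinuousOn Set.univ).bddAbove_of_isCompact isCompact_univ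

theorem IsSubadditiveCocycle.univ_mem_backwardSlow [TopologicalSpace X]
    [TopologicalSpace.NoetherianSpace X] (hg : IsSubadditiveCocycle f g)
    (hf : Continuous f) (hf_closed : IsClosedMap f) (hf_surj : Function.Surjective f)
    (husc : ∀ n, UpperSemicontinuous (g n))
    (hx : ∃ᶠ n in atTop, ∀ w, f^[n] w = x → g n w ≤ 0) (hb : 0 < b) :
    Set.univ ∈ backwardSlow f g x b := by
  have hbdd := fun n => bddAbove_range_of_upperSemicontinuous (husc n)
  have closed_rare := rarelyVisited_closeds (I := backwardSlow f g x b) hf hf_closed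
    fun Y d hd hY ih => hg.mem_backwardSlow_of_image_eq husc hbdd hx hb Y.isClosed hd hY
      fun W hW hWY => ih ⟨W, hW⟩ hWY
  exact hg.mem_backwardSlow_of_image_eq husc hbdd hx hb isClosed_univ one_pos
    (Set.image_univ_of_surjective hf_surj) fun W hW _ => closed_rare ⟨W, hW⟩

end SubadditiveCocycle

section SubmultiplicativeCocycle

variable {X : Type*} {f : X → X} {κ : ℕ → X → ℝ} {x : X} {a b c : ℝ}

open Real in
/-- The logarithm of a sub-multiplicative cocycle `κ`, normalised so that growth of `κ n` like
`c ^ n` becomes growth rate zero. Truncating with `log⁺` allows `κ` to vanish. -/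
noncomputable def posLogCocycle (κ : ℕ → X → ℝ) (c : ℝ) (n : ℕ) (y : X) : ℝ :=
  log⁺ (κ n y / c ^ n)

lemma isSubadditiveCocycle_posLogCocycle (hκ0 : ∀ n y, 0 ≤ κ n y)
    (hκsub : ∀ n m y, κ (n + m) y ≤ κ n y * κ m (f^[n] y)) (hc : 0 ≤ c) :
    IsSubadditiveCocycle f (posLogCocycle κ c) := by
  intro n m y
  have normalised_le : κ (n + m) y / c ^ (n + m) ≤ κ n y / c ^ n * (κ m (f^[n] y) / c ^ m) := by
    rw [div_mul_div_comm, ← pow_add]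
    gcongr
    exact hκsub n m y
  exact (Real.posLog_le_posLog (div_nonneg (hκ0 _ _) (pow_nonneg hc _)) normalised_le).trans
    Real.posLog_mul

lemma upperSemicontinuous_posLogCocycle [TopologicalSpace X] (hκ0 : ∀ n y, 0 ≤ κ n y)
    (husc : ∀ n, UpperSemicontinuous (κ n)) (hc : 0 ≤ c) (n : ℕ) :
    UpperSemicontinuous (posLogCocycle κ c n) := by
  have eq_comp : posLogCocycle κ c n = (fun t => Real.posLog (max t 0 / c ^ n)) ∘ κ n := by
    ext y
    simp only [posLogCocycle, Function.comp_apply, max_eq_left (hκ0 n y)]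
  rw [eq_comp]
  refine Continuous.comp_upperSemicontinuous (by fun_prop) (husc n) fun s t hst => ?_
  exact Real.posLog_le_posLog (by positivity) (by gcongr)

theorem eventually_le_pow_of_frequently_le_pow [TopologicalSpace X]
    [TopologicalSpace.NoetherianSpace X]
    (hf : Continuous f) (hf_closed : IsClosedMap f) (hf_surj : Function.Surjective f)
    (hκ0 : ∀ n y, 0 ≤ κ n y) (husc : ∀ n, UpperSemicontinuous (κ n))
    (hκsub : ∀ n m y, κ (n + m) y ≤ κ n y * κ m (f^[n] y)) (ha : 0 < a) (hab : a < b)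
    (hx : ∃ᶠ n in atTop, ∀ w, f^[n] w = x → κ n w ≤ a ^ n) :
    ∀ᶠ n in atTop, ∀ w, f^[n] w = x → κ n w ≤ b ^ n := by
  have hlog : 0 < Real.log (b / a) := Real.log_pos ((one_lt_div ha).2 hab)
  have posLog_nonpos : ∃ᶠ n in atTop, ∀ w, f^[n] w = x → posLogCocycle κ a n w ≤ 0 := by
    refine hx.mono fun n hn w hw => ((Real.posLog_eq_zero_iff _).2 ?_).le
    rw [abs_of_nonneg (div_nonneg (hκ0 n w) (pow_nonneg ha.le n))]
    exact div_le_one_of_le₀ (hn w hw) (pow_nonneg ha.le n)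
  obtain ⟨C, hC⟩ := mem_backwardSlow.1 <|
    (isSubadditiveCocycle_posLogCocycle hκ0 hκsub ha.le).univ_mem_backwardSlow hf hf_closed hf_surj
      (upperSemicontinuous_posLogCocycle hκ0 husc ha.le) posLog_nonpos (half_pos hlog)
  have rate_large : ∀ᶠ n : ℕ in atTop, C ≤ n * (Real.log (b / a) / 2) :=
    (tendsto_natCast_atTop_atTop.atTop_mul_const (half_pos hlog)).eventually_ge_atTop C
  filter_upwards [rate_large] with n hn w hw
  by_contra! hlt
  have pow_lt : (b / a) ^ n < κ n w / a ^ n := by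
    rw [div_pow]
    gcongr
  have lt_log := Real.log_lt_log (pow_pos (div_pos (ha.trans hab) ha) n) pow_lt
  have log_le : Real.log (κ n w / a ^ n) ≤ posLogCocycle κ a n w := le_max_right _ _
  rw [Real.log_pow] at lt_log
  linarith [hC n w (Set.mem_univ w) hw]

lemma le_pow_of_submultiplicative (hκ0 : ∀ n y, 0 ≤ κ n y)
    (hκsub : ∀ n m y, κ (n + m) y ≤ κ n y * κ m (f^[n] y)) {M : ℝ} (hM : ∀ y, κ 1 y ≤ M)
    {n : ℕ} (hn : 1 ≤ n) (y : X) : κ n y ≤ M ^ n := by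
  have hM0 : 0 ≤ M := (hκ0 1 y).trans (hM y)
  induction n, hn using Nat.le_induction with
  | base => simpa using hM y
  | succ n _ ih =>
    calc κ (n + 1) y ≤ κ n y * κ 1 (f^[n] y) := hκsub n 1 y
      _ ≤ M ^ n * M := mul_le_mul ih (hM _) (hκ0 _ _) (pow_nonneg hM0 n)
      _ = M ^ (n + 1) := (pow_succ M n).symm

lemma rpow_one_div_le_iff_of_isGreatest {φ : X → ℝ} {S : Set X} {M : ℝ}
    (hM : IsGreatest (φ '' S) M) (hM0 : 0 ≤ M) {n : ℕ} (hn : 0 < n) (hc : 0 ≤ c) :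
    M ^ (1 / (n : ℝ)) ≤ c ↔ ∀ w ∈ S, φ w ≤ c ^ n := by
  rw [one_div, Real.rpow_inv_le_iff_of_pos hM0 hc (by exact_mod_cast hn), Real.rpow_natCast,
    isLUB_le_iff hM.isLUB, mem_upperBounds, Set.forall_mem_image]

end SubmultiplicativeCocycle

theorem stmt_11_general {X : Type*} [TopologicalSpace X] [TopologicalSpace.NoetherianSpace X]
    {f : X → X} (hf_cont : Continuous f) (hf_closed : IsClosedMap f)
    {κ : ℕ → X → ℝ} (hκ0 : ∀ n x, 0 ≤ κ n x) (hκusc : ∀ n, UpperSemicontinuous (κ n))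
    (hκsub : ∀ n m x, κ (n + m) x ≤ κ n x * κ m (f^[n] x)) {κneg : ℕ → X → ℝ}
    (hκneg : ∀ n x, IsGreatest (κ n '' (f^[n] ⁻¹' {x})) (κneg n x)) (x : X) :
    ∃ c : ℝ, Tendsto (fun n : ℕ => κneg n x ^ (1 / (n : ℝ))) atTop (nhds c) := by
  have hf_surj : Function.Surjective f := fun y =>
    let ⟨w, hw, _⟩ := (hκneg 1 y).1; ⟨w, hw⟩
  have hκneg0 : ∀ n, 0 ≤ κneg n x := fun n =>
    let ⟨w, _, hw⟩ := (hκneg n x).1; hw ▸ hκ0 n w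
  have root_nonneg : ∀ n : ℕ, 0 ≤ κneg n x ^ (1 / (n : ℝ)) := fun n => Real.rpow_nonneg (hκneg0 n) _
  have root_le_iff : ∀ {n : ℕ} {c : ℝ}, 0 < n → 0 ≤ c →
      (κneg n x ^ (1 / (n : ℝ)) ≤ c ↔ ∀ w, f^[n] w = x → κ n w ≤ c ^ n) := fun hn hc =>
    rpow_one_div_le_iff_of_isGreatest (hκneg _ x) (hκneg0 _) hn hc
  refine tendsto_of_no_upcrossings dense_univ ?_ ?_ (isBoundedUnder_of ⟨0, root_nonneg⟩)
  · rintro a - b - hab ⟨below, above⟩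
    obtain ⟨n, hn⟩ := below.exists
    have ha : 0 < a := (root_nonneg n).trans_lt hn
    have fibre_le : ∃ᶠ n in atTop, ∀ w, f^[n] w = x → κ n w ≤ a ^ n :=
      (below.and_eventually (eventually_gt_atTop 0)).mono fun n hn =>
        (root_le_iff hn.2 ha.le).1 hn.1.le
    refine above ?_
    filter_upwards [eventually_gt_atTop 0, eventually_le_pow_of_frequently_le_pow hf_cont hf_closed
      hf_surj hκ0 hκusc hκsub ha hab fibre_le] with n hn hle
    exact not_lt.2 ((root_le_iff hn (ha.trans hab).le).2 hle)
  · obtain ⟨M, hM⟩ := bddAbove_range_of_upperSemicontinuous (hκusc 1)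
    have hM1 : ∀ y, κ 1 y ≤ M := fun y => hM ⟨y, rfl⟩
    refine isBoundedUnder_of_eventually_le (a := M) ?_
    filter_upwards [eventually_gt_atTop 0] with n hn
    exact (root_le_iff hn ((hκ0 1 x).trans (hM1 x))).2 fun w _ =>
      le_pow_of_submultiplicative hκ0 hκsub hM1 hn w

/-- For every `x`, the sequence `[κ₋ₙ(x)]^{1/n}` converges. -/
theorem stmt_11 {X : Type*} [TopologicalSpace X] [Nonempty X]
    [TopologicalSpace.NoetherianSpace X] [IrreducibleSpace X]
    (f : X → X) (hf_cont : Continuous f) (hf_open : IsOpenMap f)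
    (hf_closed : IsClosedMap f) (hf_surj : Function.Surjective f)
    (κ : ℕ → X → ℝ)
    (hκ1 : ∀ n x, 1 ≤ κ n x)
    (hκmin : ∀ n, ∃ x, κ n x = 1)
    (hκusc : ∀ n (δ : ℝ), IsClosed {x : X | δ ≤ κ n x})
    (hκsub : ∀ n m x, κ (n + m) x ≤ κ n x * κ m (f^[n] x))
    (κneg : ℕ → X → ℝ)
    (hκneg : ∀ n x, IsGreatest (κ n '' (f^[n] ⁻¹' {x})) (κneg n x))
    (hBaire : ∀ Y : Set X, Y.Nonempty → IsClosed Y → IsIrreducible Y →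
      ∀ Z : ℕ → Set X, (∀ i, IsClosed (Z i) ∧ Z i ⊂ Y) → Y ≠ ⋃ i, Z i)
    (k : ℕ) (hdimX : topologicalKrullDim X = (k : ℕ∞)) :
    ∀ x : X, ∃ c : ℝ,
      Tendsto (fun n : ℕ => (κneg n x) ^ (1 / (n : ℝ))) atTop (nhds c) := by
  exact stmt_11_general hf_cont hf_closed (fun n x => zero_le_one.trans (hκ1 n x))
    (fun n => upperSemicontinuous_iff_isClosed_preimage.2 (hκusc n)) hκsub hκneg
end

section
/- For every real δ > 1, the level set S_δ := {x ∈ X : κ_-(x) ≥ δ} is a proper closed subset of X, it is invariant under f in the sense that f(S_δ) = S_δ, and for every n ≥ 1 it is contained in the orbit ⋃_{m≥0} f^[m]({x ∈ X : κ_n(x) ≥ δ^n}). In particular κ_- is upper semicontinuous for the topology of X (all its superlevel sets are closed). -/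
open Filter

/-!
Work with the subadditive cocycle `u = log κ` and the rate `c = log δ`. Call a closed set `Q`
exceptional if, for some `d < c`, `u L y ≤ K + d L` whenever `f^[L] y ∉ Q`. Exceptional sets are
stable under intersection and under `f`, so by Noetherianity there is a least one `Q`, and
`f '' Q = Q`. Clearly `κ₋ < δ` off `Q`.

Exceptional sets arise as follows. By Noetherian induction every closed set `E` contains a closed
set `P`, periodic under `f`, such that an orbit ending outside the forward orbit of `P` spends an
arbitrarily small proportion of its time in `E`. For `E = {a ≤ u 1}` with `a < c` this makes the
forward orbit of `P` exceptional. Hence an irreducible `W ⊆ Q` with `f '' W = W` lies in that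
forward orbit, thus in some `f^[i] '' P`, thus in `P ⊆ E`; letting `a → c`, `u 1 ≥ c` on `W`.
The same holds for the powers of `f`. As every `x ∈ Q` lies in an irreducible periodic `W ⊆ Q`,
whose points include preimages of `x` of all large orders divisible by the period, `κ₋ x ≥ δ`.
-/

section NoetherianInduction

open TopologicalSpace

variable {X : Type*} [TopologicalSpace X]

theorem isClosed_noetherian_induction [NoetherianSpace X] {p : Set X → Prop}
    (step : ∀ A, IsClosed A → (∀ B, IsClosed B → B ⊂ A → p B) → p A)
    {A : Set X} (hA : IsClosed A) : p A := by
  suffices ∀ A : Closeds X, p A from this ⟨A, hA⟩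
  intro A
  induction A using WellFoundedLT.induction with
  | ind A ih => exact step A A.isClosed fun B hB hBA => ih ⟨B, hB⟩ hBA

theorem isClosed_irreducible_induction [NoetherianSpace X] {p : Set X → Prop} (empty : p ∅)
    (union : ∀ A B, p A → p B → p (A ∪ B))
    (irreducible : ∀ A, IsClosed A → IsIrreducible A → (∀ B, IsClosed B → B ⊂ A → p B) → p A)
    {A : Set X} (hA : IsClosed A) : p A := by
  refine isClosed_noetherian_induction (fun A hA ih => ?_) hA
  rcases A.eq_empty_or_nonempty with rfl | hne
  · exact empty
  by_cases hirr : IsPreirreducible A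
  · exact irreducible A hA ⟨hne, hirr⟩ ih
  rw [isPreirreducible_iff_isClosed_union_isClosed] at hirr
  push Not at hirr
  obtain ⟨B, C, hB, hC, hABC, hAB, hAC⟩ := hirr
  have inter_ssubset {D : Set X} (hAD : ¬A ⊆ D) : A ∩ D ⊂ A :=
    Set.inter_subset_left.ssubset_of_ne (mt Set.inter_eq_left.1 hAD)
  rw [← Set.inter_eq_left.2 hABC, Set.inter_union_distrib_left]
  exact union _ _ (ih _ (hA.inter hB) (inter_ssubset hAB)) (ih _ (hA.inter hC) (inter_ssubset hAC))

theorem exists_subset_of_isIrreducible_of_subset_iUnion {ι : Type*} {W : Set X} {F : ι → Set X}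
    (hW : IsIrreducible W) (hF : ∀ i, IsClosed (F i)) (hfin : (Set.range F).Finite)
    (hsub : W ⊆ ⋃ i, F i) : ∃ i, W ⊆ F i := by
  obtain ⟨Z, hZ, hWZ⟩ := isIrreducible_iff_sUnion_isClosed.1 hW hfin.toFinset
    (by simpa using hF) (by simpa using hsub)
  obtain ⟨i, rfl⟩ := hfin.mem_toFinset.1 hZ
  exact ⟨i, hWZ⟩

end NoetherianInduction

section PeriodicSets

open TopologicalSpace Function

variable {X : Type*} {g : X → X}

/-- The forward orbit of the set `P` under `g`. -/
def forwardOrbit (g : X → X) (P : Set X) : Set X := ⋃ i : ℕ, g^[i] '' P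

theorem forwardOrbit_union (P P' : Set X) :
    forwardOrbit g (P ∪ P') = forwardOrbit g P ∪ forwardOrbit g P' := by
  simp only [forwardOrbit, Set.image_union, Set.iUnion_union_distrib]

theorem iterate_mem_forwardOrbit {P : Set X} {y : X} {i L : ℕ} (hi : i ≤ L) (hy : g^[i] y ∈ P) :
    g^[L] y ∈ forwardOrbit g P := by
  refine Set.mem_iUnion.2 ⟨L - i, g^[i] y, hy, ?_⟩
  rw [← iterate_add_apply, Nat.sub_add_cancel hi]

theorem mem_periodicPts_image_iff {P : Set X} :
    P ∈ periodicPts (Set.image g) ↔ ∃ m > 0, g^[m] '' P = P := by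
  simp only [mem_periodicPts, IsPeriodicPt, IsFixedPt, ← Set.image_iterate_eq]

theorem union_mem_periodicPts_image {P P' : Set X} (hP : P ∈ periodicPts (Set.image g))
    (hP' : P' ∈ periodicPts (Set.image g)) : P ∪ P' ∈ periodicPts (Set.image g) := by
  obtain ⟨m, hm, hPm⟩ := hP
  obtain ⟨m', hm', hPm'⟩ := hP'
  have hP_mul : g^[m * m'] '' P = P := by
    simpa only [Set.image_iterate_eq] using (hPm.mul_const m').isFixedPt.eq
  have hP'_mul : g^[m * m'] '' P' = P' := by
    simpa only [Set.image_iterate_eq] using (hPm'.const_mul m).isFixedPt.eq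
  exact mem_periodicPts_image_iff.2
    ⟨m * m', Nat.mul_pos hm hm', by rw [Set.image_union, hP_mul, hP'_mul]⟩

theorem finite_range_iterate_of_mem_periodicPts {α : Type*} {h : α → α} {a : α}
    (ha : a ∈ periodicPts h) : (Set.range fun i : ℕ => h^[i] a).Finite := by
  obtain ⟨m, hm, hma⟩ := ha
  refine ((Set.finite_Iio m).image fun i => h^[i] a).subset ?_
  rintro _ ⟨i, rfl⟩
  exact ⟨i % m, Nat.mod_lt i hm, hma.iterate_mod_apply i⟩

theorem finite_range_image_iterate {P : Set X} (hP : P ∈ periodicPts (Set.image g)) :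
    (Set.range fun i : ℕ => g^[i] '' P).Finite := by
  simpa only [Set.image_iterate_eq] using finite_range_iterate_of_mem_periodicPts hP

variable [TopologicalSpace X]

theorem isClosedMap_iterate_s12 (hg : IsClosedMap g) (n : ℕ) : IsClosedMap g^[n] := by
  induction n with
  | zero => exact IsClosedMap.id
  | succ n ih => exact ih.comp hg

theorem isClosed_forwardOrbit (hg : IsClosedMap g) {P : Set X} (hP : IsClosed P)
    (hper : P ∈ periodicPts (Set.image g)) : IsClosed (forwardOrbit g P) := by
  rw [forwardOrbit, ← Set.sUnion_range, Set.sUnion_eq_biUnion]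
  refine (finite_range_image_iterate hper).isClosed_biUnion ?_
  rintro _ ⟨i, rfl⟩
  exact isClosedMap_iterate_s12 hg i P hP

theorem subset_of_image_eq_of_subset_forwardOrbit (hg : IsClosedMap g) {P W : Set X}
    (hP : IsClosed P) (hper : P ∈ periodicPts (Set.image g)) (hW : IsIrreducible W)
    (hfix : g '' W = W) (hsub : W ⊆ forwardOrbit g P) : W ⊆ P := by
  obtain ⟨i, hi⟩ := exists_subset_of_isIrreducible_of_subset_iUnion hW
    (fun i => isClosedMap_iterate_s12 hg i P hP) (finite_range_image_iterate hper) hsub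
  obtain ⟨m, hm, hmP⟩ := mem_periodicPts_image_iff.1 hper
  have hmod : (m * i - i) + i = m * i := Nat.sub_add_cancel (Nat.le_mul_of_pos_left i hm)
  calc W = g^[m * i - i] '' W := (IsFixedPt.image_iterate hfix _).symm
    _ ⊆ g^[m * i - i] '' (g^[i] '' P) := Set.image_mono hi
    _ = (g^[m])^[i] '' P := by rw [← Set.image_comp, ← iterate_add, hmod, iterate_mul]
    _ = P := IsFixedPt.image_iterate hmP i

theorem exists_iterate_subset_image_of_image_sUnion_eq (hg : IsClosedMap g) {S : Set (Set X)}
    (hfin : S.Finite) (hclosed : ∀ Z ∈ S, IsClosed Z) (hirr : ∀ Z ∈ S, IsIrreducible Z)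
    (hfix : g '' ⋃₀ S = ⋃₀ S) :
    ∃ back : S → S, ∀ n (Z : S), (Z : Set X) ⊆ g^[n] '' (back^[n] Z : S) := by
  have : Finite S := hfin
  have exists_subset_image (Z : S) : ∃ Z' : S, (Z : Set X) ⊆ g '' Z' :=
    exists_subset_of_isIrreducible_of_subset_iUnion (hirr Z Z.2)
      (fun Z' => hg _ (hclosed Z' Z'.2)) (Set.finite_range _) <| by
        rw [← Set.image_iUnion, ← Set.sUnion_eq_iUnion, hfix]
        exact Set.subset_sUnion_of_mem Z.2
  choose back hback using exists_subset_image
  refine ⟨back, fun n => ?_⟩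
  induction n with
  | zero => simp
  | succ n ih =>
    intro Z
    rw [iterate_succ_apply, iterate_succ', Set.image_comp]
    exact (hback Z).trans (Set.image_mono (ih _))

variable [NoetherianSpace X]

theorem image_eq_of_subset_image (hg : Continuous g) {Z : Set X} (hZ : IsClosed Z)
    (hsub : Z ⊆ g '' Z) : g '' Z = Z := by
  revert hsub
  refine isClosed_noetherian_induction
    (p := fun Z => Z ⊆ g '' Z → g '' Z = Z) (fun Z hZ ih hsub => ?_) hZ
  have himage : g '' (Z ∩ g ⁻¹' Z) = Z := by
    rw [Set.image_inter_preimage, Set.inter_eq_right.2 hsub]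
  rcases Set.inter_subset_left.eq_or_ssubset (a := Z ∩ g ⁻¹' Z) with heq | hlt
  · rwa [heq] at himage
  · have := ih _ (hZ.inter (hZ.preimage hg)) hlt (by rw [himage]; exact hlt.subset)
    exact absurd (this.symm.trans himage) hlt.ne

theorem exists_irreducible_periodic_of_mem (hg : Continuous g) (hgc : IsClosedMap g)
    {Q : Set X} (hQ : IsClosed Q) (hfix : g '' Q = Q) {x : X} (hx : x ∈ Q) :
    ∃ W ⊆ Q, x ∈ W ∧ IsIrreducible W ∧ W ∈ periodicPts (Set.image g) := by
  obtain ⟨S, hSfin, hSclosed, hSirr, rfl⟩ :=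
    NoetherianSpace.exists_finite_set_isClosed_irreducible hQ
  have : Finite S := hSfin
  obtain ⟨back, hback⟩ :=
    exists_iterate_subset_image_of_image_sUnion_eq hgc hSfin hSclosed hSirr hfix
  obtain ⟨Z, hZ, hxZ⟩ := hx
  obtain ⟨a, b, hab, hrep⟩ : ∃ a b, a < b ∧ back^[a] ⟨Z, hZ⟩ = back^[b] ⟨Z, hZ⟩ :=
    (Set.toFinite Set.univ).exists_lt_map_eq_of_forall_mem fun _ => Set.mem_univ _
  obtain ⟨W, hW⟩ : ∃ W : S, W = back^[a] ⟨Z, hZ⟩ := ⟨_, rfl⟩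
  have hWfix : g^[b - a] '' W = W := by
    refine image_eq_of_subset_image (hg.iterate _) (hSclosed W W.2) ?_
    have := hback (b - a) W
    rwa [hW, ← iterate_add_apply, Nat.sub_add_cancel hab.le, ← hrep, ← hW] at this
  refine ⟨g^[a] '' W, ?_, ?_, (hSirr W W.2).image _ (hg.iterate a).continuousOn,
    mem_periodicPts_image_iff.2 ⟨b - a, Nat.sub_pos_of_lt hab, ?_⟩⟩
  · rw [← IsFixedPt.image_iterate hfix a]
    exact Set.image_mono (Set.subset_sUnion_of_mem W.2)
  · rw [hW]
    exact hback a ⟨Z, hZ⟩ hxZ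
  · rw [← Set.image_comp, (Commute.iterate_iterate_self g (b - a) a).comp_eq, Set.image_comp, hWfix]

end PeriodicSets

section VisitFrequency

open TopologicalSpace Function

variable {X : Type*} {g : X → X}

theorem birkhoffSum_mono {φ ψ : X → ℝ} (h : φ ≤ ψ) (L : ℕ) (y : X) :
    birkhoffSum g φ L y ≤ birkhoffSum g ψ L y :=
  Finset.sum_le_sum fun i _ => h (g^[i] y)

theorem birkhoffSum_indicator_union_le (A B : Set X) (L : ℕ) (y : X) :
    birkhoffSum g ((A ∪ B).indicator (1 : X → ℝ)) L y ≤
      birkhoffSum g (A.indicator 1) L y + birkhoffSum g (B.indicator 1) L y := by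
  rw [← birkhoffSum_add']
  refine birkhoffSum_mono (fun x => ?_) L y
  by_cases hA : x ∈ A <;> by_cases hB : x ∈ B <;> simp [hA, hB]

theorem birkhoffSum_indicator_le_one {D : Set X} {N : ℕ}
    (hgap : ∀ y ∈ D, ∀ j, 0 < j → j < N → g^[j] y ∉ D) {L : ℕ} (hL : L ≤ N) (y : X) :
    birkhoffSum g (D.indicator (1 : X → ℝ)) L y ≤ 1 := by
  classical
  have no_return {i j : ℕ} (hij : i < j) (hj : j < L) (hi : g^[i] y ∈ D) : g^[j] y ∉ D := by
    have := hgap _ hi (j - i) (by omega) (by omega)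
    rwa [← iterate_add_apply, Nat.sub_add_cancel hij.le] at this
  have hcard : ((Finset.range L).filter fun i => g^[i] y ∈ D).card ≤ 1 := by
    refine Finset.card_le_one.2 fun i hi j hj => ?_
    rw [Finset.mem_filter, Finset.mem_range] at hi hj
    rcases lt_trichotomy i j with hij | hij | hij
    · exact absurd hj.2 (no_return hij hj.1 hi.2)
    · exact hij
    · exact absurd hi.2 (no_return hij hi.1 hj.2)
  simpa [birkhoffSum, Set.indicator_apply, Finset.sum_boole] using hcard

theorem birkhoffSum_indicator_le_div_add_one {D : Set X} {N : ℕ} (hN : 0 < N)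
    (hgap : ∀ y ∈ D, ∀ j, 0 < j → j < N → g^[j] y ∉ D) (L : ℕ) (y : X) :
    birkhoffSum g (D.indicator (1 : X → ℝ)) L y ≤ L / N + 1 := by
  induction L using Nat.strong_induction_on generalizing y with
  | _ L ih =>
    rcases le_total L N with hL | hL
    · have : (0 : ℝ) ≤ L / N := by positivity
      linarith [birkhoffSum_indicator_le_one hgap hL y]
    · obtain ⟨r, rfl⟩ := Nat.exists_eq_add_of_le hL
      calc birkhoffSum g (D.indicator (1 : X → ℝ)) (N + r) y
          = birkhoffSum g (D.indicator 1) N y + birkhoffSum g (D.indicator 1) r (g^[N] y) :=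
            birkhoffSum_add ..
        _ ≤ 1 + (r / N + 1) :=
            add_le_add (birkhoffSum_indicator_le_one hgap le_rfl y) (ih r (by omega) _)
        _ = (N + r : ℕ) / N + 1 := by push_cast; field_simp; ring

/-- `E` contains, for every `ε > 0`, a closed `g`-periodic set `P` accounting for all frequent
visits to `E`: an orbit segment of length `L` ending outside the forward orbit of `P` visits `E` at
most `ε L + O(1)` times. The number of visits is the Birkhoff sum of the indicator function. -/
def HasPeriodicCore [TopologicalSpace X] (g : X → X) (E : Set X) : Prop :=
  ∀ ε > (0 : ℝ), ∃ P ⊆ E, IsClosed P ∧ P ∈ periodicPts (Set.image g) ∧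
    ∃ M : ℝ, ∀ y L, g^[L] y ∉ forwardOrbit g P →
      birkhoffSum g (E.indicator 1) L y ≤ ε * L + M

namespace HasPeriodicCore

variable [TopologicalSpace X]

theorem union {A B : Set X} (hA : HasPeriodicCore g A) (hB : HasPeriodicCore g B) :
    HasPeriodicCore g (A ∪ B) := by
  intro ε hε
  obtain ⟨P, hPA, hP, hPper, M, hM⟩ := hA (ε / 2) (half_pos hε)
  obtain ⟨P', hPB, hP', hPper', M', hM'⟩ := hB (ε / 2) (half_pos hε)
  refine ⟨P ∪ P', Set.union_subset_union hPA hPB, hP.union hP',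
    union_mem_periodicPts_image hPper hPper', M + M', fun y L hy => ?_⟩
  rw [forwardOrbit_union, Set.mem_union, not_or] at hy
  linarith [birkhoffSum_indicator_union_le (g := g) A B L y, hM y L hy.1, hM' y L hy.2]

theorem of_mem_periodicPts {E : Set X} (hE : IsClosed E)
    (hper : E ∈ periodicPts (Set.image g)) : HasPeriodicCore g E := by
  refine fun ε hε => ⟨E, subset_rfl, hE, hper, 0, fun y L hy => ?_⟩
  have hzero : birkhoffSum g (E.indicator (1 : X → ℝ)) L y = 0 :=
    Finset.sum_eq_zero fun i hi => Set.indicator_of_notMem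
      (fun hiE => hy (iterate_mem_forwardOrbit (Finset.mem_range.1 hi).le hiE)) _
  rw [hzero]
  positivity

theorem of_sparse_diff {E : Set X}
    (h : ∀ N : ℕ, ∃ E' ⊆ E, HasPeriodicCore g E' ∧
      ∀ y ∈ E \ E', ∀ j, 0 < j → j < N → g^[j] y ∉ E \ E') :
    HasPeriodicCore g E := by
  intro ε hε
  obtain ⟨N, hN⟩ := exists_nat_gt (2 / ε)
  have hNpos : (0 : ℝ) < N := (div_pos two_pos hε).trans hN
  obtain ⟨E', hE'E, hcore, hgap⟩ := h N
  obtain ⟨P, hPE', hP, hper, M, hM⟩ := hcore (ε / 2) (half_pos hε)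
  refine ⟨P, hPE'.trans hE'E, hP, hper, M + 1, fun y L hy => ?_⟩
  have hsplit := birkhoffSum_indicator_union_le (g := g) E' (E \ E') L y
  rw [Set.union_sdiff_cancel hE'E] at hsplit
  have hsparse := birkhoffSum_indicator_le_div_add_one (Nat.cast_pos.1 hNpos) hgap L y
  have hdiv : (L : ℝ) / N ≤ ε / 2 * L := by
    rw [div_lt_iff₀ hε] at hN
    rw [div_le_iff₀ hNpos]
    nlinarith [L.cast_nonneg (α := ℝ)]
  linarith [hM y L hy]

theorem of_isIrreducible [NoetherianSpace X] (hg : Continuous g) (hgc : IsClosedMap g)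
    {E : Set X} (hE : IsClosed E) (hirr : IsIrreducible E)
    (ih : ∀ B, IsClosed B → B ⊂ E → HasPeriodicCore g B) :
    HasPeriodicCore g E := by
  by_cases hper : E ∈ periodicPts (Set.image g)
  · exact of_mem_periodicPts hE hper
  refine of_sparse_diff fun N => ?_
  have hclosed (i : Fin N) : IsClosed (E ∩ g^[i + 1] '' E) :=
    hE.inter (isClosedMap_iterate_s12 hgc _ E hE)
  have hproper : ⋃ i : Fin N, E ∩ g^[i + 1] '' E ⊂ E := by
    refine (Set.iUnion_subset fun i => Set.inter_subset_left).ssubset_of_ne fun heq => ?_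
    obtain ⟨i, hi⟩ := exists_subset_of_isIrreducible_of_subset_iUnion hirr hclosed
      (Set.finite_range _) heq.ge
    exact hper (mem_periodicPts_image_iff.2 ⟨i + 1, Nat.succ_pos i,
      image_eq_of_subset_image (hg.iterate _) hE (hi.trans Set.inter_subset_right)⟩)
  refine ⟨_, hproper.subset, ih _ (isClosed_iUnion_of_finite hclosed) hproper, ?_⟩
  rintro y ⟨hyE, -⟩ j hj hjN ⟨hjE, hj_notMem⟩
  refine hj_notMem (Set.mem_iUnion.2 ⟨⟨j - 1, by omega⟩, hjE, y, hyE, ?_⟩)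
  rw [Nat.sub_add_cancel hj]

theorem of_isClosed [NoetherianSpace X] (hg : Continuous g) (hgc : IsClosedMap g) {E : Set X}
    (hE : IsClosed E) : HasPeriodicCore g E :=
  isClosed_irreducible_induction
    (of_mem_periodicPts isClosed_empty
      (mem_periodicPts_image_iff.2 ⟨1, one_pos, Set.image_empty _⟩))
    (fun _ _ => union) (fun _ hA hirr ih => of_isIrreducible hg hgc hA hirr ih) hE

end HasPeriodicCore

end VisitFrequency

section SubadditiveCocycle

open TopologicalSpace Function

theorem mul_natDiv_le_div_mul_add_abs (d : ℝ) (L n : ℕ) :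
    d * (L / n : ℕ) ≤ d / n * L + |d| := by
  have hfloor_le : ((L / n : ℕ) : ℝ) ≤ L / n := Nat.cast_div_le
  have hle_floor : (L : ℝ) / n - 1 ≤ (L / n : ℕ) := by
    rw [← Nat.floor_div_eq_div (K := ℝ)]
    exact (Nat.sub_one_lt_floor _).le
  have herror : |((L / n : ℕ) : ℝ) - L / n| ≤ 1 := abs_le.2 ⟨by linarith, by linarith⟩
  calc d * (L / n : ℕ) = d / n * L + d * ((L / n : ℕ) - L / n) := by ring
    _ ≤ d / n * L + |d| * |((L / n : ℕ) : ℝ) - L / n| := by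
      rw [← abs_mul]; gcongr; exact le_abs_self _
    _ ≤ d / n * L + |d| := by gcongr; exact mul_le_of_le_one_right (abs_nonneg d) herror

variable {X : Type*} [TopologicalSpace X] {f : X → X} {u : ℕ → X → ℝ} {c : ℝ}

/-- An upper semicontinuous subadditive cocycle over `f`: the logarithm of the paper's analytic
sub-multiplicative cocycle, without normalisation. -/
structure IsSubadditiveCocycle_s12 (f : X → X) (u : ℕ → X → ℝ) : Prop where
  upperSemicontinuous (n : ℕ) : UpperSemicontinuous (u n)
  apply_add_le (n m : ℕ) (x : X) : u (n + m) x ≤ u n x + u m (f^[n] x)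

/-- A closed set `Q` outside which the cocycle grows, along backward orbits, at a linear rate
uniformly smaller than `c`. The least such set is the superlevel set `{κ₋ ≥ exp c}`. -/
def IsExceptional (f : X → X) (u : ℕ → X → ℝ) (c : ℝ) (Q : Set X) : Prop :=
  IsClosed Q ∧ ∃ d < c, ∃ K : ℝ, ∀ y (L : ℕ), f^[L] y ∉ Q → u L y ≤ K + d * L

theorem isExceptional_univ : IsExceptional f u c Set.univ :=
  ⟨isClosed_univ, c - 1, sub_one_lt c, 0, fun _ _ h => absurd (Set.mem_univ _) h⟩

theorem IsExceptional.inter {Q Q' : Set X} (hQ : IsExceptional f u c Q)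
    (hQ' : IsExceptional f u c Q') : IsExceptional f u c (Q ∩ Q') := by
  obtain ⟨hclosed, d, hd, K, hK⟩ := hQ
  obtain ⟨hclosed', d', hd', K', hK'⟩ := hQ'
  refine ⟨hclosed.inter hclosed', max d d', max_lt hd hd', max K K', fun y L hy => ?_⟩
  rcases not_and_or.1 hy with hy | hy
  · refine (hK y L hy).trans ?_
    gcongr
    exacts [le_max_left _ _, le_max_left _ _]
  · refine (hK' y L hy).trans ?_
    gcongr
    exacts [le_max_right _ _, le_max_right _ _]

theorem exists_isLeast_isExceptional [NoetherianSpace X] (f : X → X) (u : ℕ → X → ℝ) (c : ℝ) :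
    ∃ Q, IsLeast {Q | IsExceptional f u c Q} Q := by
  obtain ⟨Q, hQ, hmin⟩ := wellFounded_lt.has_min {Q : Closeds X | IsExceptional f u c Q}
    ⟨⊤, isExceptional_univ⟩
  refine ⟨Q, hQ, fun Q' hQ' => Set.inter_eq_left.1 ?_⟩
  by_contra hne
  exact hmin (Q ⊓ ⟨Q', hQ'.1⟩) (hQ.inter hQ')
    (inf_le_left.lt_of_ne fun heq => hne (congrArg SetLike.coe heq))

namespace IsSubadditiveCocycle_s12

theorem iterate (hu : IsSubadditiveCocycle_s12 f u) (n : ℕ) :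
    IsSubadditiveCocycle_s12 f^[n] fun q => u (n * q) where
  upperSemicontinuous q := hu.upperSemicontinuous (n * q)
  apply_add_le q r x := by
    simpa only [mul_add, ← iterate_mul] using hu.apply_add_le (n * q) (n * r) x

theorem le_birkhoffSum_one (hu : IsSubadditiveCocycle_s12 f u) {L : ℕ} (hL : 0 < L) (y : X) :
    u L y ≤ birkhoffSum f (u 1) L y := by
  induction L, hL using Nat.le_induction with
  | base => rw [birkhoffSum_one]
  | succ L _ ih =>
    rw [birkhoffSum_succ]
    linarith [hu.apply_add_le L 1 y]

theorem le_birkhoffSum (hu : IsSubadditiveCocycle_s12 f u) (n : ℕ) {L : ℕ} (hL : 0 < L) (y : X) :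
    u (n * L) y ≤ birkhoffSum f^[n] (u n) L y := by
  simpa only [mul_one] using (hu.iterate n).le_birkhoffSum_one hL y

variable [NoetherianSpace X]

theorem exists_forall_le (hu : IsSubadditiveCocycle_s12 f u) (n : ℕ) : ∃ C, ∀ x, u n x ≤ C := by
  obtain ⟨C, hC⟩ := (hu.upperSemicontinuous n).upperSemicontinuousOn Set.univ
    |>.bddAbove_of_isCompact isCompact_univ
  exact ⟨C, fun x => hC ⟨x, Set.mem_univ x, rfl⟩⟩

theorem exists_forall_lt_le (hu : IsSubadditiveCocycle_s12 f u) (n : ℕ) :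
    ∃ C, ∀ r < n, ∀ x, u r x ≤ C := by
  choose C hC using hu.exists_forall_le
  obtain ⟨B, hB⟩ := ((Finset.range n).image C).exists_le
  exact ⟨B, fun r hr x => (hC r x).trans
    (hB _ (Finset.mem_image_of_mem C (Finset.mem_range.2 hr)))⟩

theorem isExceptional_image (hu : IsSubadditiveCocycle_s12 f u) (hf : IsClosedMap f) {Q : Set X}
    (hQ : IsExceptional f u c Q) : IsExceptional f u c (f '' Q) := by
  obtain ⟨hclosed, d, hd, K, hK⟩ := hQ
  obtain ⟨C₀, hC₀⟩ := hu.exists_forall_le 0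
  obtain ⟨C₁, hC₁⟩ := hu.exists_forall_le 1
  refine ⟨hf Q hclosed, d, hd, max C₀ (K + C₁ - d), fun y L hy => ?_⟩
  cases L with
  | zero => simpa using Or.inl (hC₀ y)
  | succ L =>
    rw [iterate_succ_apply'] at hy
    have hbound := hK y L fun h => hy (Set.mem_image_of_mem f h)
    push_cast
    linarith [hu.apply_add_le L 1 y, hC₁ (f^[L] y), le_max_right C₀ (K + C₁ - d)]

theorem image_eq_of_isLeast (hu : IsSubadditiveCocycle_s12 f u) (hf : Continuous f)
    (hfc : IsClosedMap f) {Q : Set X} (hQ : IsLeast {Q | IsExceptional f u c Q} Q) : f '' Q = Q :=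
  image_eq_of_subset_image hf hQ.1.1 (hQ.2 (hu.isExceptional_image hfc hQ.1))

theorem isExceptional_of_iterate (hu : IsSubadditiveCocycle_s12 f u) {n : ℕ} (hn : 0 < n) {Q : Set X}
    (hQ : IsExceptional f^[n] (fun q => u (n * q)) (n * c) Q) : IsExceptional f u c Q := by
  obtain ⟨hclosed, d, hd, K, hK⟩ := hQ
  obtain ⟨B, hB⟩ := hu.exists_forall_lt_le n
  have hnpos : (0 : ℝ) < n := Nat.cast_pos.2 hn
  refine ⟨hclosed, d / n, (div_lt_iff₀' hnpos).2 hd, B + K + |d|, fun y L hy => ?_⟩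
  have hL : L % n + n * (L / n) = L := Nat.mod_add_div L n
  have hsub := hu.apply_add_le (L % n) (n * (L / n)) y
  have htail := hK (f^[L % n] y) (L / n) (by
    rwa [← iterate_mul, ← iterate_add_apply, add_comm, hL])
  have hrate := mul_natDiv_le_div_mul_add_abs d L n
  rw [hL] at hsub
  linarith [hB _ (Nat.mod_lt L hn) y]

theorem exists_periodic_isExceptional_forwardOrbit (hu : IsSubadditiveCocycle_s12 f u)
    (hf : Continuous f) (hfc : IsClosedMap f) {a : ℝ} (hac : a < c) :
    ∃ P ⊆ {x | a ≤ u 1 x}, IsClosed P ∧ P ∈ periodicPts (Set.image f) ∧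
      IsExceptional f u c (forwardOrbit f P) := by
  set E := {x | a ≤ u 1 x}
  have hE : IsClosed E := upperSemicontinuous_iff_isClosed_preimage.1 (hu.upperSemicontinuous 1) a
  obtain ⟨C₀, hC₀⟩ := hu.exists_forall_le 0
  obtain ⟨C₁, hC₁⟩ := hu.exists_forall_le 1
  obtain ⟨d, had, hdc⟩ := exists_between hac
  obtain ⟨B, hB_pos, hB⟩ : ∃ B > 0, C₁ ≤ a + B :=
    ⟨max 1 (C₁ - a), by positivity, by linarith [le_max_right 1 (C₁ - a)]⟩
  have hu_le : u 1 ≤ (fun _ => a) + B • E.indicator 1 := fun x => by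
    by_cases hx : x ∈ E
    · simpa [hx] using (hC₁ x).trans hB
    · simpa [hx] using (not_le.1 hx).le
  obtain ⟨P, hPE, hP, hper, M, hM⟩ :=
    HasPeriodicCore.of_isClosed hf hfc hE ((d - a) / B) (div_pos (sub_pos.2 had) hB_pos)
  refine ⟨P, hPE, hP, hper, isClosed_forwardOrbit hfc hP hper, d, hdc, max C₀ (B * M),
    fun y L hy => ?_⟩
  rcases L.eq_zero_or_pos with rfl | hL
  · simpa using Or.inl (hC₀ y)
  calc u L y ≤ birkhoffSum f (u 1) L y := hu.le_birkhoffSum_one hL y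
    _ ≤ birkhoffSum f ((fun _ => a) + B • E.indicator 1) L y := birkhoffSum_mono hu_le L y
    _ = L * a + B * birkhoffSum f (E.indicator 1) L y := by
      simp [birkhoffSum, Finset.sum_add_distrib, Finset.mul_sum]
    _ ≤ L * a + B * ((d - a) / B * L + M) := by gcongr; exact hM y L hy
    _ = B * M + d * L := by field_simp; ring
    _ ≤ max C₀ (B * M) + d * L := by gcongr; exact le_max_right _ _

theorem le_apply_one_of_isIrreducible (hu : IsSubadditiveCocycle_s12 f u) (hf : Continuous f)
    (hfc : IsClosedMap f) {W : Set X} (hirr : IsIrreducible W) (hfix : f '' W = W)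
    (hW : ∀ Q, IsExceptional f u c Q → W ⊆ Q) {y : X} (hy : y ∈ W) : c ≤ u 1 y := by
  refine le_of_forall_lt fun a ha => ?_
  obtain ⟨a', haa', ha'⟩ := exists_between ha
  obtain ⟨P, hPsub, hP, hper, hexc⟩ := hu.exists_periodic_isExceptional_forwardOrbit hf hfc ha'
  have hWP : W ⊆ P :=
    subset_of_image_eq_of_subset_forwardOrbit hfc hP hper hirr hfix (hW _ hexc)
  exact haa'.trans_le (hPsub (hWP hy))

theorem mul_le_of_isIrreducible (hu : IsSubadditiveCocycle_s12 f u) (hf : Continuous f)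
    (hfc : IsClosedMap f) {W : Set X} (hirr : IsIrreducible W) {n : ℕ} (hn : 0 < n)
    (hfix : f^[n] '' W = W) (hW : ∀ Q, IsExceptional f u c Q → W ⊆ Q) {y : X} (hy : y ∈ W) :
    n * c ≤ u n y := by
  simpa only [mul_one] using
    (hu.iterate n).le_apply_one_of_isIrreducible (hf.iterate n) (isClosedMap_iterate_s12 hfc n) hirr
      hfix (fun Q hQ => hW Q (hu.isExceptional_of_iterate hn hQ)) hy

theorem exists_periodic_mul_le_of_mem (hu : IsSubadditiveCocycle_s12 f u) (hf : Continuous f)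
    (hfc : IsClosedMap f) {Q : Set X} (hQ : IsLeast {Q | IsExceptional f u c Q} Q) {x : X}
    (hx : x ∈ Q) :
    ∃ W, x ∈ W ∧ ∃ m > 0, ∀ n, f^[n * m] '' W = W ∧
      (0 < n → ∀ y ∈ W, ↑(n * m) * c ≤ u (n * m) y) := by
  obtain ⟨W, hWQ, hxW, hirr, hper⟩ := exists_irreducible_periodic_of_mem hf hfc hQ.1.1
    (hu.image_eq_of_isLeast hf hfc hQ) hx
  obtain ⟨m, hm, hfix⟩ := mem_periodicPts_image_iff.1 hper
  have hfix_mul (n : ℕ) : f^[n * m] '' W = W := by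
    rw [mul_comm, iterate_mul]
    exact IsFixedPt.image_iterate hfix n
  exact ⟨W, hxW, m, hm, fun n => ⟨hfix_mul n, fun hn y hy => hu.mul_le_of_isIrreducible hf hfc hirr
    (Nat.mul_pos hn hm) (hfix_mul n) (fun Q' hQ' => hWQ.trans (hQ.2 hQ')) hy⟩⟩

theorem subset_forwardOrbit_of_isLeast (hu : IsSubadditiveCocycle_s12 f u) (hf : Continuous f)
    (hfc : IsClosedMap f) {Q : Set X} (hQ : IsLeast {Q | IsExceptional f u c Q} Q) {n : ℕ}
    (hn : 0 < n) : Q ⊆ forwardOrbit f {x | n * c ≤ u n x} := by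
  intro x hx
  obtain ⟨W, hxW, m, hm, hW⟩ := hu.exists_periodic_mul_le_of_mem hf hfc hQ hx
  obtain ⟨y, hyW, rfl⟩ : x ∈ f^[n * m] '' W := by rwa [(hW n).1]
  have hsum : ∑ _i ∈ Finset.range m, n * c ≤ ∑ i ∈ Finset.range m, u n ((f^[n])^[i] y) := by
    calc ∑ _i ∈ Finset.range m, n * c = ↑(n * m) * c := by
          rw [Finset.sum_const, Finset.card_range, nsmul_eq_mul]; push_cast; ring
      _ ≤ u (n * m) y := (hW n).2 hn y hyW
      _ ≤ birkhoffSum f^[n] (u n) m y := hu.le_birkhoffSum n hm y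
  obtain ⟨i, hi, hle⟩ :=
    Finset.exists_le_of_sum_le (Finset.nonempty_range_iff.2 hm.ne') hsum
  rw [← iterate_mul] at hle
  exact iterate_mem_forwardOrbit (Nat.mul_le_mul_left n (Finset.mem_range.1 hi).le) hle

end IsSubadditiveCocycle_s12

end SubadditiveCocycle

section BackwardGrowthRate

open TopologicalSpace

theorem le_exp_of_tendsto_root {v : ℕ → ℝ} {l K d : ℝ} (hv : ∀ n, 0 ≤ v n)
    (hlim : Tendsto (fun n : ℕ => v n ^ (1 / (n : ℝ))) atTop (nhds l))
    (hle : ∀ n : ℕ, v n ≤ Real.exp (K + d * n)) : l ≤ Real.exp d := by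
  have hbound : Tendsto (fun n : ℕ => Real.exp (K * (1 / (n : ℝ)) + d)) atTop
      (nhds (Real.exp d)) := by
    refine (Real.continuous_exp.tendsto d).comp ?_
    simpa using (tendsto_one_div_atTop_nhds_zero_nat.const_mul K).add_const d
  refine le_of_tendsto_of_tendsto hlim hbound ((eventually_gt_atTop 0).mono fun n hn => ?_)
  have hn' : (n : ℝ) ≠ 0 := Nat.cast_ne_zero.2 hn.ne'
  calc v n ^ (1 / (n : ℝ)) ≤ Real.exp (K + d * n) ^ (1 / (n : ℝ)) :=
        Real.rpow_le_rpow (hv n) (hle n) (by positivity)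
    _ = Real.exp (K * (1 / (n : ℝ)) + d) := by
      rw [← Real.exp_mul]
      field_simp

theorem le_of_tendsto_root {v : ℕ → ℝ} {l δ : ℝ} (hδ : 0 ≤ δ)
    (hlim : Tendsto (fun n : ℕ => v n ^ (1 / (n : ℝ))) atTop (nhds l))
    (hle : ∃ᶠ n in atTop, δ ^ n ≤ v n) : δ ≤ l := by
  refine ge_of_tendsto_of_frequently hlim
    ((hle.and_eventually (eventually_ne_atTop 0)).mono fun n hn => ?_)
  calc δ = (δ ^ n) ^ (1 / (n : ℝ)) := by rw [one_div, Real.pow_rpow_inv_natCast hδ hn.2]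
    _ ≤ v n ^ (1 / (n : ℝ)) := Real.rpow_le_rpow (by positivity) hn.1 (by positivity)

variable {X : Type*} {f : X → X} {κ κneg : ℕ → X → ℝ} {κm : X → ℝ} {δ : ℝ}

theorem pow_le_iff_mul_log_le_log {a : ℝ} (hδ : 0 < δ) (ha : 0 < a) (n : ℕ) :
    δ ^ n ≤ a ↔ n * Real.log δ ≤ Real.log a := by
  rw [← Real.log_pow, Real.log_le_log_iff (pow_pos hδ n) ha]

theorem pos_of_isGreatest_fiber (hκ : ∀ n x, 0 < κ n x)
    (hκneg : ∀ n x, IsGreatest (κ n '' (f^[n] ⁻¹' {x})) (κneg n x)) (n : ℕ) (x : X) :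
    0 < κneg n x := by
  obtain ⟨y, -, hy⟩ := (hκneg n x).1
  exact hy ▸ hκ n y

variable [TopologicalSpace X]

theorem isSubadditiveCocycle_log (hκ : ∀ n x, 0 < κ n x)
    (hκusc : ∀ n (δ : ℝ), IsClosed {x : X | δ ≤ κ n x})
    (hκsub : ∀ n m x, κ (n + m) x ≤ κ n x * κ m (f^[n] x)) :
    IsSubadditiveCocycle_s12 f fun n x => Real.log (κ n x) where
  upperSemicontinuous n := upperSemicontinuous_iff_isClosed_preimage.2 fun a => by
    simpa only [Set.preimage, Set.mem_Ici, Real.le_log_iff_exp_le (hκ n _)]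
      using hκusc n (Real.exp a)
  apply_add_le n m x := by
    rw [← Real.log_mul (hκ n x).ne' (hκ m _).ne']
    exact Real.log_le_log (hκ _ x) (hκsub n m x)

theorem superlevel_subset_of_isExceptional (hκ : ∀ n x, 0 < κ n x)
    (hκneg : ∀ n x, IsGreatest (κ n '' (f^[n] ⁻¹' {x})) (κneg n x))
    (hκm : ∀ x, Tendsto (fun n : ℕ => κneg n x ^ (1 / (n : ℝ))) atTop (nhds (κm x)))
    (hδ : 0 < δ) {Q : Set X}
    (hQ : IsExceptional f (fun n x => Real.log (κ n x)) (Real.log δ) Q) :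
    {x | δ ≤ κm x} ⊆ Q := by
  intro x hx
  by_contra hxQ
  obtain ⟨-, d, hd, K, hK⟩ := hQ
  have hle : κm x ≤ Real.exp d := by
    refine le_exp_of_tendsto_root (K := K)
      (fun n => (pos_of_isGreatest_fiber hκ hκneg n x).le) (hκm x) fun n => ?_
    obtain ⟨y, rfl, hy⟩ := (hκneg n x).1
    rw [← hy, ← Real.log_le_iff_le_exp (hκ n y)]
    exact hK y n hxQ
  exact absurd ((Real.lt_log_iff_exp_lt hδ).1 hd) (not_lt.2 (le_trans hx hle))

theorem isLeast_isExceptional_superlevel [NoetherianSpace X] (hf : Continuous f)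
    (hfc : IsClosedMap f) (hκ : ∀ n x, 0 < κ n x)
    (hlog : IsSubadditiveCocycle_s12 f fun n x => Real.log (κ n x))
    (hκneg : ∀ n x, IsGreatest (κ n '' (f^[n] ⁻¹' {x})) (κneg n x))
    (hκm : ∀ x, Tendsto (fun n : ℕ => κneg n x ^ (1 / (n : ℝ))) atTop (nhds (κm x)))
    (hδ : 0 < δ) :
    IsLeast {Q | IsExceptional f (fun n x => Real.log (κ n x)) (Real.log δ) Q}
      {x | δ ≤ κm x} := by
  obtain ⟨Q, hQ⟩ := exists_isLeast_isExceptional f (fun n x => Real.log (κ n x)) (Real.log δ)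
  suffices Q ⊆ {x | δ ≤ κm x} by
    rwa [(superlevel_subset_of_isExceptional hκ hκneg hκm hδ hQ.1).antisymm this]
  intro x hx
  obtain ⟨W, hxW, m, hm, hW⟩ := hlog.exists_periodic_mul_le_of_mem hf hfc hQ hx
  refine le_of_tendsto_root hδ.le (hκm x) (frequently_atTop.2 fun N => ⟨(N + 1) * m, ?_, ?_⟩)
  · exact N.le_succ.trans (Nat.le_mul_of_pos_right _ hm)
  · obtain ⟨y, hyW, rfl⟩ : x ∈ f^[(N + 1) * m] '' W := by rwa [(hW (N + 1)).1]
    calc δ ^ ((N + 1) * m) ≤ κ ((N + 1) * m) y :=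
          (pow_le_iff_mul_log_le_log hδ (hκ _ y) _).2 ((hW (N + 1)).2 N.succ_pos y hyW)
      _ ≤ κneg ((N + 1) * m) (f^[(N + 1) * m] y) := (hκneg _ _).2 ⟨y, rfl, rfl⟩

end BackwardGrowthRate

theorem stmt_12_general {X : Type*} [TopologicalSpace X] [TopologicalSpace.NoetherianSpace X]
    [IrreducibleSpace X] (f : X → X) (hf_cont : Continuous f) (hf_closed : IsClosedMap f)
    (κ : ℕ → X → ℝ)
    (hκpos : ∀ n x, 0 < κ n x)
    (hκusc : ∀ n (δ : ℝ), IsClosed {x : X | δ ≤ κ n x})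
    (hκsub : ∀ n m x, κ (n + m) x ≤ κ n x * κ m (f^[n] x))
    (κneg : ℕ → X → ℝ)
    (hκneg : ∀ n x, IsGreatest (κ n '' (f^[n] ⁻¹' {x})) (κneg n x))
    (κm : X → ℝ)
    (hκm : ∀ x : X,
      Tendsto (fun n : ℕ => (κneg n x) ^ (1 / (n : ℝ))) atTop (nhds (κm x))) :
    (∀ δ : ℝ, 0 < δ →
      IsClosed {x : X | δ ≤ κm x} ∧
      ((∃ n ≥ 1, ∃ x, κ n x < δ ^ n) → {x : X | δ ≤ κm x} ≠ Set.univ) ∧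
      f '' {x : X | δ ≤ κm x} = {x : X | δ ≤ κm x} ∧
      ∀ n : ℕ, 1 ≤ n →
        {x : X | δ ≤ κm x} ⊆ ⋃ m : ℕ, f^[m] '' {x : X | δ ^ n ≤ κ n x}) ∧
    (∀ δ : ℝ, IsClosed {x : X | δ ≤ κm x}) := by
  have hlog := isSubadditiveCocycle_log hκpos hκusc hκsub
  have hleast {δ : ℝ} (hδ : 0 < δ) :=
    isLeast_isExceptional_superlevel hf_cont hf_closed hκpos hlog hκneg hκm hδ
  have hfix {δ : ℝ} (hδ : 0 < δ) := hlog.image_eq_of_isLeast hf_cont hf_closed (hleast hδ)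
  refine ⟨fun δ hδ => ⟨(hleast hδ).1.1, ?_, hfix hδ, fun n hn => ?_⟩, fun δ => ?_⟩
  · rintro ⟨n, hn, x, hx⟩ huniv
    have hfix_univ : f^[n] '' Set.univ = Set.univ :=
      Function.IsFixedPt.image_iterate (huniv ▸ hfix hδ) n
    refine hx.not_ge ((pow_le_iff_mul_log_le_log hδ (hκpos n x) n).2 ?_)
    exact hlog.mul_le_of_isIrreducible hf_cont hf_closed (IrreducibleSpace.isIrreducible_univ X) hn
      hfix_univ (fun Q hQ => huniv ▸ (hleast hδ).2 hQ) (Set.mem_univ x)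
  · simpa only [forwardOrbit, ← pow_le_iff_mul_log_le_log hδ (hκpos n _)] using
      hlog.subset_forwardOrbit_of_isLeast hf_cont hf_closed (hleast hδ) hn
  · rcases lt_or_ge 0 δ with hδ | hδ
    · exact (hleast hδ).1.1
    · have hκm_nonneg (x : X) : 0 ≤ κm x := ge_of_tendsto' (hκm x) fun n =>
        Real.rpow_nonneg (pos_of_isGreatest_fiber hκpos hκneg n x).le _
      simp [hδ.trans (hκm_nonneg _)]

/-- For `δ > 1` the level set `{κ₋ ≥ δ}` is a proper closed subset of `X`,
invariant under `f`, and contained in the orbit of `{κ_n ≥ δ^n}` for every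
`n ≥ 1`; in particular all superlevel sets of `κ₋` are closed. -/
theorem stmt_12 {X : Type*} [TopologicalSpace X] [Nonempty X]
    [TopologicalSpace.NoetherianSpace X] [IrreducibleSpace X]
    (f : X → X) (hf_cont : Continuous f) (hf_open : IsOpenMap f)
    (hf_closed : IsClosedMap f) (hf_surj : Function.Surjective f)
    (κ : ℕ → X → ℝ)
    (hκ1 : ∀ n x, 1 ≤ κ n x)
    (hκmin : ∀ n, ∃ x, κ n x = 1)
    (hκusc : ∀ n (δ : ℝ), IsClosed {x : X | δ ≤ κ n x})
    (hκsub : ∀ n m x, κ (n + m) x ≤ κ n x * κ m (f^[n] x))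
    (κneg : ℕ → X → ℝ)
    (hκneg : ∀ n x, IsGreatest (κ n '' (f^[n] ⁻¹' {x})) (κneg n x))
    (hBaire : ∀ Y : Set X, Y.Nonempty → IsClosed Y → IsIrreducible Y →
      ∀ Z : ℕ → Set X, (∀ i, IsClosed (Z i) ∧ Z i ⊂ Y) → Y ≠ ⋃ i, Z i)
    (k : ℕ) (hdimX : topologicalKrullDim X = (k : ℕ∞))
    (κm : X → ℝ)
    (hκm : ∀ x : X,
      Tendsto (fun n : ℕ => (κneg n x) ^ (1 / (n : ℝ))) atTop (nhds (κm x))) :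
    (∀ δ : ℝ, 1 < δ →
      IsClosed {x : X | δ ≤ κm x} ∧
      {x : X | δ ≤ κm x} ≠ Set.univ ∧
      f '' {x : X | δ ≤ κm x} = {x : X | δ ≤ κm x} ∧
      ∀ n : ℕ, 1 ≤ n →
        {x : X | δ ≤ κm x} ⊆ ⋃ m : ℕ, f^[m] '' {x : X | δ ^ n ≤ κ n x}) ∧
    (∀ δ : ℝ, IsClosed {x : X | δ ≤ κm x}) := by
  obtain ⟨x, hx⟩ := hκmin 1
  exact (stmt_12_general f hf_cont hf_closed κ (fun n x => one_pos.trans_le (hκ1 n x)) hκusc hκsub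
    κneg hκneg κm hκm).imp_left fun h δ hδ => (h δ (one_pos.trans hδ)).imp_right
      (And.imp_left fun hproper => hproper ⟨1, le_rfl, x, by rwa [hx, pow_one]⟩)
end
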